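/- For |x| < 1 let Φ(x) = Σ_{k,l≥0} (4k+1) x^{(4k+1)(4l+1)} + Σ_{k,l≥0} (4k+3) x^{(4k+3)(4l+3)} and F(x) = ∏_{n=1}^∞ (1 − xⁿ). Then for every complex x with |x| < 1, Φ(x) = x · F(x⁸)^{14} / ( F(x⁴)⁶ F(x^{16})⁴ ). (This expresses the coefficient of (xy)²+(xw)²+(zy)²+(zw)² in the open Gromov–Witten potential of ℙ¹_{2,2,2,2} as the eta quotient η(q_d⁸)^{14}/(η(q_d⁴)⁶η(q_d^{16})⁴), hence as a modular form for Γ(2) in the Kähler parameter q = q_d⁸.) -/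

import Mathlib

open scoped BigOperators

/-- The Euler product `F(x) = ∏_{n=1}^∞ (1 − xⁿ)`. -/
noncomputable def eulerF (x : ℂ) : ℂ := ∏' n : ℕ, (1 - x ^ (n + 1))

/-- `Φ(x) = Σ_{k,l≥0} (4k+1) x^{(4k+1)(4l+1)} + Σ_{k,l≥0} (4k+3) x^{(4k+3)(4l+3)}`,
the coefficient of `(xy)²+(xw)²+(zy)²+(zw)²` in the open Gromov–Witten
potential of `ℙ¹_{2,2,2,2}`. -/
noncomputable def Phi2222 (x : ℂ) : ℂ :=
  (∑' p : ℕ × ℕ, (4 * (p.1 : ℂ) + 1) * x ^ ((4 * p.1 + 1) * (4 * p.2 + 1)))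
    + ∑' p : ℕ × ℕ, (4 * (p.1 : ℂ) + 3) * x ^ ((4 * p.1 + 3) * (4 * p.2 + 3))

/-- `Ψ(x) = Σ_{k,l≥0} (k+l+1) x^{(4k+1)(4l+3)}`, the coefficient of `xyzw` in
the open Gromov–Witten potential of `ℙ¹_{2,2,2,2}`. -/
noncomputable def Psi2222 (x : ℂ) : ℂ :=
  ∑' p : ℕ × ℕ, ((p.1 : ℂ) + (p.2 : ℂ) + 1) * x ^ ((4 * p.1 + 1) * (4 * p.2 + 3))

/-!
Expanding `∏ (b - t pⁱ) / ∏ (b - pᵏ)` in partial fractions at the nodes `pᵏ`, evaluating at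
`b = a⁻¹ p^N` and letting the number of nodes on either side of `N` grow gives Kronecker's
product for the bilateral Lambert series `∑ tⁿ / (1 - a pⁿ)`. Evaluating at the zero `b = t p^N` of
the numerator, with the vanishing factor removed, gives in the same way a product for
`∑ tⁿ / (1 - p^(n+1) / t)²`. At `p = q²`, `t = q` these two products are the theta identities
`φ(q)² = 2 ∑ qⁿ / (1 + q^(2n))` and `ψ(q)⁴ = ∑ qⁿ / (1 - q^(2n+1))²`.

The even part of the first identity is `φ(q)² + φ(-q)² = 2 φ(q²)²`, so `ψ(q)² = φ(q) ψ(q²)` yields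
`ψ(q)⁴ + ψ(-q)⁴ = 2 (φ(q²) ψ(q²))²`. Expanding the second identity as
`ψ(q)⁴ = ∑_{k,l ≥ 0} (2k+1) q^(2kl+k+l)`, whose exponent has the parity of `k + l`, identifies the
left side at `q = x²` with `2 Φ(x) / x`, and the right side is an eta quotient.
-/

open Filter Topology
open Finset (range)
open Finset.HasAntidiagonal (antidiagonal mem_antidiagonal)

/-! ### Partial fractions at the powers of `p` -/

section

variable {K : Type*} [Field K]

theorem prod_sub_div_prod_sub_eq_sum {ι κ : Type*} [DecidableEq ι] {s : Finset ι} {v : ι → K}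
    (hv : Set.InjOn v s) {s' : Finset κ} (hcard : s'.card < s.card) (w : κ → K) {b : K}
    (hb : ∀ k ∈ s, b ≠ v k) :
    (∏ i ∈ s', (b - w i)) / ∏ k ∈ s, (b - v k) =
      ∑ m ∈ s, (∏ i ∈ s', (v m - w i)) / (∏ k ∈ s.erase m, (v m - v k)) / (b - v m) := by
  have interpolation := congrArg (Polynomial.eval b) <|
    Lagrange.eq_interpolate_of_eval_eq (f := Lagrange.nodal s' w)
      (fun m ↦ ∏ i ∈ s', (v m - w i)) hv (by simpa [Lagrange.degree_nodal] using hcard)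
      fun _ _ ↦ Lagrange.eval_nodal
  rw [Lagrange.eval_interpolate_not_at_node _ hb, Lagrange.eval_nodal, Lagrange.eval_nodal]
    at interpolation
  rw [interpolation, mul_div_cancel_left₀ _
    (Finset.prod_ne_zero_iff.mpr fun k hk ↦ sub_ne_zero.mpr (hb k hk))]
  refine Finset.sum_congr rfl fun m _ ↦ ?_
  rw [Lagrange.nodalWeight, Finset.prod_inv_distrib]
  ring

/-- The finite `q`-Pochhammer symbol `(a; p)ₙ = (1 - a)(1 - ap) ⋯ (1 - ap^(n-1))`, with base `p`. -/
def qPochhammer (a p : K) (n : ℕ) : K := ∏ i ∈ range n, (1 - a * p ^ i)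

/-- The coefficient `(a; p)ₙ / (p; p)ₙ` of `zⁿ` in the `q`-binomial series
`∏ᵢ (1 - a z pⁱ) / (1 - z pⁱ)`. It is the junk value `0` when `p` is a root of unity of order at
most `n`. -/
def qBinomialCoeff (a p : K) (n : ℕ) : K := qPochhammer a p n / qPochhammer p p n

variable {p : K}

theorem ne_zero_of_pow_injective (hp : Function.Injective fun k : ℕ ↦ p ^ k) : p ≠ 0 := by
  rintro rfl
  exact absurd (@hp 1 2 (by simp)) (by norm_num)

theorem prod_range_mul_pow_sub (x : K) {y : K} (hy : y ≠ 0) (N : ℕ) :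
    ∏ i ∈ range N, (x * p ^ N - y * p ^ i) =
      (-y) ^ N * p ^ N.choose 2 * qPochhammer (p * x / y) p N := by
  have gauss : p ^ N.choose 2 = ∏ i ∈ range N, p ^ i := by
    rw [Finset.prod_pow_eq_pow_sum, Finset.sum_range_id, Nat.choose_two_right]
  rw [gauss, qPochhammer, ← Finset.prod_range_reflect (fun i ↦ 1 - p * x / y * p ^ i),
    Finset.pow_eq_prod_const (-y), ← Finset.prod_mul_distrib, ← Finset.prod_mul_distrib]
  refine Finset.prod_congr rfl fun i hi ↦ ?_
  have reflect : p * p ^ (N - 1 - i) * p ^ i = p ^ N := by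
    rw [← pow_succ', ← pow_add]
    congr 1
    have := Finset.mem_range.mp hi
    omega
  rw [← reflect]
  field_simp
  ring

theorem prod_range_sub_mul_pow {x : K} (hx : x ≠ 0) (y : K) (L : ℕ) :
    ∏ i ∈ range L, (x - y * p ^ i) = x ^ L * qPochhammer (y / x) p L := by
  rw [qPochhammer, Finset.pow_eq_prod_const, ← Finset.prod_mul_distrib]
  refine Finset.prod_congr rfl fun i _ ↦ ?_
  field_simp

theorem prod_range_add_mul_pow_sub (hp : p ≠ 0) {x y : K} (hx : x ≠ 0) (hy : y ≠ 0) (N L : ℕ) :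
    ∏ i ∈ range (N + L), (x * p ^ N - y * p ^ i) =
      (-y) ^ N * p ^ N.choose 2 * qPochhammer (p * x / y) p N *
        ((x * p ^ N) ^ L * qPochhammer (y / x) p L) := by
  have hpN := pow_ne_zero N hp
  rw [Finset.prod_range_add, prod_range_mul_pow_sub x hy]
  simp_rw [pow_add, ← mul_assoc y]
  rw [prod_range_sub_mul_pow (mul_ne_zero hx hpN), mul_div_mul_right _ _ hpN]

theorem prod_range_erase (f : ℕ → K) (N L : ℕ) :
    ∏ i ∈ (range (N + L + 1)).erase N, f i =
      (∏ i ∈ range N, f i) * ∏ i ∈ range L, f (N + 1 + i) := by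
  have split : (range (N + L + 1)).erase N =
      (range N).disjUnion ((range L).map (addLeftEmbedding (N + 1)))
        (by simp [Finset.disjoint_left]; omega) := by
    ext k
    simp only [Finset.mem_erase, Finset.mem_range, Finset.mem_disjUnion, Finset.mem_map,
      addLeftEmbedding_apply]
    refine ⟨fun hk ↦ ?_, by rintro (h | ⟨a, ha, rfl⟩) <;> omega⟩
    exact (lt_or_gt_of_ne hk.1).imp_right fun h ↦ ⟨k - (N + 1), by omega, by omega⟩
  rw [split, Finset.prod_disjUnion, Finset.prod_map]
  rfl

theorem prod_range_erase_pow_sub (hp : p ≠ 0) (N L : ℕ) :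
    ∏ i ∈ (range (N + L + 1)).erase N, (p ^ N - p ^ i) =
      (-1) ^ N * p ^ N.choose 2 * qPochhammer p p N * ((p ^ N) ^ L * qPochhammer p p L) := by
  have low := prod_range_mul_pow_sub (p := p) 1 one_ne_zero N
  have high := prod_range_sub_mul_pow (p := p) (pow_ne_zero N hp) (p ^ (N + 1)) L
  rw [pow_succ' p N, mul_div_cancel_right₀ _ (pow_ne_zero N hp)] at high
  simp only [one_mul, mul_one, div_one] at low
  rw [prod_range_erase, low, ← high]
  simp_rw [pow_add, pow_one, mul_comm (p ^ N) p]

theorem prod_sub_div_prod_erase_sub (hp : p ≠ 0) {t : K} (ht : t ≠ 0) (m j : ℕ) :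
    (∏ i ∈ range (m + j), (p ^ m - t * p ^ i)) /
        ∏ k ∈ (range (m + j + 1)).erase m, (p ^ m - p ^ k) =
      t ^ m * qBinomialCoeff (p / t) p m * qBinomialCoeff t p j := by
  have num := prod_range_add_mul_pow_sub hp one_ne_zero ht m j
  simp only [one_mul, mul_one, div_one] at num
  rw [num, prod_range_erase_pow_sub hp, neg_pow t, qBinomialCoeff, qBinomialCoeff]
  field_simp

theorem prod_sub_div_prod_sub_pow (hp : Function.Injective fun k : ℕ ↦ p ^ k) {t : K}
    (ht : t ≠ 0) (M : ℕ) {b : K} (hb : ∀ k : ℕ, b ≠ p ^ k) :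
    (∏ i ∈ range M, (b - t * p ^ i)) / ∏ k ∈ range (M + 1), (b - p ^ k) =
      ∑ x ∈ antidiagonal M,
        t ^ x.1 * qBinomialCoeff (p / t) p x.1 * qBinomialCoeff t p x.2 / (b - p ^ x.1) := by
  rw [prod_sub_div_prod_sub_eq_sum hp.injOn (by simp) _ fun k _ ↦ hb k,
    ← Finset.Nat.sum_antidiagonal_eq_sum_range_succ_mk
      (fun x ↦ (∏ i ∈ range M, (p ^ x.1 - t * p ^ i)) /
        (∏ k ∈ (range (M + 1)).erase x.1, (p ^ x.1 - p ^ k)) / (b - p ^ x.1))]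
  refine Finset.sum_congr rfl fun ⟨m, j⟩ h ↦ ?_
  obtain rfl := mem_antidiagonal.mp h
  rw [prod_sub_div_prod_erase_sub (ne_zero_of_pow_injective hp) ht]

-- At the node `p ^ m`, erasing the factor `i = N` divides the residue by `p ^ m - t * p ^ N`, which
-- makes the pole double.
theorem prod_erase_sub_div_prod_sub_pow (hp : Function.Injective fun k : ℕ ↦ p ^ k) {t : K}
    (ht : t ≠ 0) {M N : ℕ} (hN : N < M) (htp : ∀ k : ℕ, t * p ^ N ≠ p ^ k) :
    (∏ i ∈ (range M).erase N, (t * p ^ N - t * p ^ i)) /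
        ∏ k ∈ range (M + 1), (t * p ^ N - p ^ k) =
      -∑ x ∈ antidiagonal M,
        t ^ x.1 * qBinomialCoeff (p / t) p x.1 * qBinomialCoeff t p x.2 /
          (t * p ^ N - p ^ x.1) ^ 2 := by
  rw [prod_sub_div_prod_sub_eq_sum hp.injOn
      ((Finset.card_erase_le.trans_eq (Finset.card_range M)).trans_lt (by simp)) _ fun k _ ↦ htp k,
    ← Finset.sum_neg_distrib, ← Finset.Nat.sum_antidiagonal_eq_sum_range_succ_mk
      (fun x ↦ (∏ i ∈ (range M).erase N, (p ^ x.1 - t * p ^ i)) /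
        (∏ k ∈ (range (M + 1)).erase x.1, (p ^ x.1 - p ^ k)) / (t * p ^ N - p ^ x.1))]
  refine Finset.sum_congr rfl fun ⟨m, j⟩ h ↦ ?_
  obtain rfl := mem_antidiagonal.mp h
  have hm : t * p ^ N - p ^ m ≠ 0 := sub_ne_zero.mpr (htp m)
  have full := Finset.mul_prod_erase (range (m + j)) (fun i ↦ p ^ m - t * p ^ i)
    (Finset.mem_range.mpr hN)
  rw [← prod_sub_div_prod_erase_sub (ne_zero_of_pow_injective hp) ht, ← full]
  field_simp
  ring

theorem sum_div_one_sub_mul_zpow (hp : Function.Injective fun k : ℕ ↦ p ^ k) {t a : K}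
    (ht : t ≠ 0) (ha : a ≠ 0) (hap : ∀ n : ℤ, a * p ^ n ≠ 1) (N L : ℕ) :
    ∑ x ∈ antidiagonal (N + L), t ^ ((x.1 : ℤ) - N) / (1 - a * p ^ ((x.1 : ℤ) - N)) *
        qBinomialCoeff (p / t) p x.1 * qBinomialCoeff t p x.2 =
      qPochhammer (p / (a * t)) p N * qPochhammer (a * t) p L /
        (qPochhammer (p / a) p N * qPochhammer a p (L + 1)) := by
  have hp0 := ne_zero_of_pow_injective hp
  have hpN := pow_ne_zero N hp0
  have shift (m : ℕ) : a⁻¹ * p ^ N - p ^ m = a⁻¹ * p ^ N * (1 - a * p ^ ((m : ℤ) - N)) := by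
    rw [zpow_sub₀ hp0, zpow_natCast, zpow_natCast]
    field_simp
  have node (m : ℕ) : a⁻¹ * p ^ N ≠ p ^ m := by
    rw [← sub_ne_zero, shift]
    exact mul_ne_zero (mul_ne_zero (inv_ne_zero ha) hpN) (sub_ne_zero.mpr (hap _).symm)
  have expansion := prod_sub_div_prod_sub_pow hp ht (N + L) node
  have num := prod_range_add_mul_pow_sub hp0 (inv_ne_zero ha) ht N L
  have den := prod_range_add_mul_pow_sub hp0 (inv_ne_zero ha) one_ne_zero N (L + 1)
  simp only [one_mul, div_one, one_div, inv_inv] at den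
  rw [show p * a⁻¹ / t = p / (a * t) by field_simp, show t / a⁻¹ = a * t by field_simp] at num
  rw [← div_eq_mul_inv] at den
  rw [add_assoc, num, den, neg_pow t, pow_succ _ L] at expansion
  refine mul_left_cancel₀ (div_ne_zero (mul_ne_zero (pow_ne_zero N ht) ha) hpN) ?_
  rw [Finset.mul_sum]
  refine Eq.trans ?_ (expansion.symm.trans ?_)
  · refine Finset.sum_congr rfl fun x _ ↦ ?_
    rw [shift, zpow_sub₀ ht, zpow_natCast, zpow_natCast]
    field_simp
  · field_simp

theorem prod_erase_mul_pow_sub (hp : p ≠ 0) (t : K) (N L : ℕ) :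
    ∏ i ∈ (range (N + L + 1)).erase N, (t * p ^ N - t * p ^ i) =
      t ^ (N + L) *
        ((-1) ^ N * p ^ N.choose 2 * qPochhammer p p N * ((p ^ N) ^ L * qPochhammer p p L)) := by
  simp_rw [← prod_range_erase_pow_sub hp, ← mul_sub, Finset.prod_mul_distrib]
  rw [Finset.prod_const, Finset.card_erase_of_mem (by simp), Finset.card_range,
    Nat.add_sub_cancel]

theorem sum_div_one_sub_zpow_div_sq (hp : Function.Injective fun k : ℕ ↦ p ^ k) {t : K}
    (ht : t ≠ 0) (htp : ∀ n : ℤ, t ≠ p ^ n) (N L : ℕ) :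
    ∑ x ∈ antidiagonal (N + 1 + L), t ^ ((x.1 : ℤ) - (N + 1 : ℕ)) /
          (1 - p ^ ((x.1 : ℤ) - (N + 1 : ℕ) + 1) / t) ^ 2 *
        qBinomialCoeff (p / t) p x.1 * qBinomialCoeff t p x.2 =
      qPochhammer p p N * qPochhammer p p L /
        (qPochhammer t p (N + 1) * qPochhammer (p / t) p (L + 1)) := by
  have hp0 := ne_zero_of_pow_injective hp
  have hpN := pow_ne_zero N hp0
  have shift (m : ℕ) : t * p ^ N - p ^ m =
      t * p ^ N * (1 - p ^ ((m : ℤ) - (N + 1 : ℕ) + 1) / t) := by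
    rw [show (m : ℤ) - (N + 1 : ℕ) + 1 = m - N by push_cast; ring, zpow_sub₀ hp0, zpow_natCast,
      zpow_natCast]
    field_simp
  have node (m : ℕ) : t * p ^ N ≠ p ^ m := fun h ↦ htp (m - N) <| by
    rw [zpow_sub₀ hp0, zpow_natCast, zpow_natCast, ← h, mul_div_cancel_right₀ _ hpN]
  have expansion := prod_erase_sub_div_prod_sub_pow hp ht (M := N + 1 + L) (by omega) node
  have den := prod_range_add_mul_pow_sub hp0 (div_ne_zero ht hp0) one_ne_zero (N + 1) (L + 1)
  simp only [one_mul, div_one, one_div, inv_div] at den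
  rw [mul_div_cancel₀ _ hp0] at den
  rw [show t / p * p ^ (N + 1) = t * p ^ N by field_simp; ring] at den
  rw [← add_right_comm, prod_erase_mul_pow_sub hp0, show N + L + 1 + 1 = N + 1 + (L + 1) by ring,
    den, Nat.choose_succ_succ' N 1, Nat.choose_one_right] at expansion
  refine mul_left_cancel₀
    (div_ne_zero (pow_ne_zero N ht) (mul_ne_zero ht (pow_ne_zero 2 hpN))) ?_
  rw [Finset.mul_sum]
  refine Eq.trans ?_ ((neg_eq_iff_eq_neg.mpr expansion).symm.trans ?_)
  · rw [add_right_comm]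
    refine Finset.sum_congr rfl fun x _ ↦ ?_
    rw [shift, zpow_sub₀ ht, zpow_natCast, zpow_natCast, pow_succ t N]
    field_simp
  · field_simp
    ring

theorem sum_antidiagonal_add_eq_sum_Icc {M : Type*} [AddCommMonoid M] (f : ℤ → ℕ → ℕ → M)
    (N L : ℕ) :
    ∑ x ∈ antidiagonal (N + L), f (x.1 - N) x.1 x.2 =
      ∑ n ∈ Finset.Icc (-(N : ℤ)) L, f n (n + N).toNat (L - n).toNat := by
  refine Finset.sum_nbij' (fun x ↦ (x.1 : ℤ) - N) (fun n ↦ ((n + N).toNat, (L - n).toNat))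
    ?_ ?_ ?_ ?_ ?_
  · rintro ⟨m, j⟩ h
    have := mem_antidiagonal.mp h
    simp only [Finset.mem_Icc]
    omega
  · intro n h
    have := Finset.mem_Icc.mp h
    simp only [mem_antidiagonal]
    omega
  · rintro ⟨m, j⟩ h
    have := mem_antidiagonal.mp h
    simp only [Prod.mk.injEq]
    omega
  · intro n h
    have := Finset.mem_Icc.mp h
    simp only
    omega
  · rintro ⟨m, j⟩ h
    have := mem_antidiagonal.mp h
    congr 1 <;> simp only <;> omega

theorem tendsto_sum_antidiagonal_add {α R : Type*} [NormedRing R] [CompleteSpace R]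
    {l : Filter α} {g : ℤ → R} {r s : ℕ → R} {a b : R} {u v : α → ℕ}
    (hg : Summable fun n ↦ ‖g n‖) (hr : Tendsto r atTop (𝓝 a)) (hs : Tendsto s atTop (𝓝 b))
    (hu : Tendsto u l atTop) (hv : Tendsto v l atTop) :
    Tendsto (fun i ↦ ∑ x ∈ antidiagonal (u i + v i), g (x.1 - u i) * r x.1 * s x.2) l
      (𝓝 ((∑' n, g n) * a * b)) := by
  obtain ⟨A, hA⟩ := (Metric.isBounded_range_of_tendsto r hr).exists_norm_le
  obtain ⟨B, hB⟩ := (Metric.isBounded_range_of_tendsto s hs).exists_norm_le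
  simp only [Set.forall_mem_range] at hA hB
  rw [← hg.of_norm.tsum_mul_right, ← (hg.of_norm.mul_right a).tsum_mul_right]
  have reindex i :=
    (sum_antidiagonal_add_eq_sum_Icc (fun n m j ↦ g n * r m * s j) (u i) (v i)).trans
      (sum_eq_tsum_indicator _ _)
  simp only [reindex]
  refine tendsto_tsum_of_dominated_convergence ((hg.mul_right A).mul_right B) (fun n ↦ ?_)
    (.of_forall fun i n ↦ (norm_indicator_le_norm_self _ _).trans ?_)
  · have index_left : Tendsto (fun i ↦ (n + u i).toNat) l atTop :=
      tendsto_atTop.mpr fun k ↦ (hu.eventually_ge_atTop (k + n.natAbs)).mono fun i _ ↦ by omega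
    have index_right : Tendsto (fun i ↦ (v i - n).toNat) l atTop :=
      tendsto_atTop.mpr fun k ↦ (hv.eventually_ge_atTop (k + n.natAbs)).mono fun i _ ↦ by omega
    refine ((tendsto_const_nhds.mul (hr.comp index_left)).mul (hs.comp index_right)).congr' ?_
    filter_upwards [hu.eventually_ge_atTop n.natAbs, hv.eventually_ge_atTop n.natAbs] with i hui hvi
    rw [Set.indicator_of_mem]
    · rfl
    · simp only [Finset.coe_Icc, Set.mem_Icc]
      omega
  · have hA0 : 0 ≤ A := (norm_nonneg _).trans (hA 0)
    refine norm_mul₃_le.trans ?_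
    gcongr
    exacts [hA _, hB _]

end

/-! ### Bilateral Lambert series -/

section

variable {𝕜 : Type*} [NormedField 𝕜]

theorem pow_injective_of_norm_lt_one {p : 𝕜} (hp0 : p ≠ 0) (hp : ‖p‖ < 1) :
    Function.Injective fun k : ℕ ↦ p ^ k := by
  have norm_powers := pow_right_injective₀ (norm_pos_iff.mpr hp0) hp.ne
  refine .of_comp (f := norm) ?_
  simpa only [Function.comp_def, norm_pow] using norm_powers

theorem summable_norm_pow_mul_of_tendsto {r : 𝕜} (hr : ‖r‖ < 1) {c : ℕ → 𝕜} {C : 𝕜}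
    (hc : Tendsto c atTop (𝓝 C)) : Summable fun n ↦ ‖r ^ n * c n‖ := by
  simp_rw [norm_mul]
  exact Summable.mul_tendsto_const (by simpa using hr)
    (Nat.cofinite_eq_atTop ▸ hc.norm)

/-- The infinite `q`-Pochhammer symbol `(a; p)_∞`, with base `p`. It is meaningful for `‖p‖ < 1`; a
divergent product has the junk value `1`. -/
noncomputable def qPochhammerInf (a p : 𝕜) : 𝕜 := ∏' i : ℕ, (1 - a * p ^ i)

theorem norm_div_lt_one {p t : 𝕜} (hpt : ‖p‖ < ‖t‖) : ‖p / t‖ < 1 := by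
  rw [norm_div]
  exact (div_lt_one ((norm_nonneg p).trans_lt hpt)).mpr hpt

variable {p : 𝕜}

theorem summable_norm_zpow_div_one_sub_mul_zpow {t a : 𝕜} (hp0 : p ≠ 0) (hpt : ‖p‖ < ‖t‖)
    (ht : ‖t‖ < 1) (ha : a ≠ 0) : Summable fun n : ℤ ↦ ‖t ^ n / (1 - a * p ^ n)‖ := by
  have ht0 := norm_pos_iff.mp ((norm_nonneg p).trans_lt hpt)
  have pow_tendsto := tendsto_pow_atTop_nhds_zero_of_norm_lt_one (hpt.trans ht)
  refine .of_nat_of_neg_add_one (f := fun n ↦ ‖t ^ n / (1 - a * p ^ n)‖) ?_ ?_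
  · have limit := ((pow_tendsto.const_mul a).const_sub 1).inv₀ (by simp)
    simpa [div_eq_mul_inv] using summable_norm_pow_mul_of_tendsto ht limit
  · have limit :=
      (((pow_tendsto.const_mul p).sub_const a).inv₀ (by simpa using ha)).const_mul (p / t)
    refine (summable_norm_pow_mul_of_tendsto (norm_div_lt_one hpt) limit).congr fun k ↦ ?_
    have hpk := pow_ne_zero (k + 1) hp0
    rw [show -((k : ℤ) + 1) = -((k + 1 : ℕ) : ℤ) by push_cast; rfl, zpow_neg, zpow_neg,
      zpow_natCast, zpow_natCast, ← pow_succ' p, div_pow]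
    congr 1
    rw [show 1 - a * (p ^ (k + 1))⁻¹ = (p ^ (k + 1) - a) / p ^ (k + 1) by field_simp]
    field_simp
    ring

theorem ne_zpow_of_norm_lt {t : 𝕜} (hp0 : p ≠ 0) (hpt : ‖p‖ < ‖t‖) (ht : ‖t‖ < 1) (n : ℤ) :
    t ≠ p ^ n := by
  rintro rfl
  rw [norm_zpow] at hpt ht
  have hp0' := norm_pos_iff.mpr hp0
  have hp : ‖p‖ < 1 := hpt.trans ht
  have upper : n < 1 := (zpow_lt_zpow_iff_right_of_lt_one₀ hp0' hp).mp (by simpa using hpt)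
  have lower : 0 < n := (zpow_lt_zpow_iff_right_of_lt_one₀ hp0' hp).mp (by simpa using ht)
  omega

theorem summable_norm_zpow_div_one_sub_zpow_div_sq {t : 𝕜} (hp0 : p ≠ 0) (hpt : ‖p‖ < ‖t‖)
    (ht : ‖t‖ < 1) : Summable fun n : ℤ ↦ ‖t ^ n / (1 - p ^ (n + 1) / t) ^ 2‖ := by
  have ht0 := norm_pos_iff.mp ((norm_nonneg p).trans_lt hpt)
  have pow_tendsto := tendsto_pow_atTop_nhds_zero_of_norm_lt_one (hpt.trans ht)
  refine .of_nat_of_neg_add_one (f := fun n ↦ ‖t ^ n / (1 - p ^ (n + 1) / t) ^ 2‖) ?_ ?_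
  · have limit := ((((pow_tendsto.comp (tendsto_add_atTop_nat 1)).div_const t).const_sub 1).pow
      2).inv₀ (by simp)
    refine (summable_norm_pow_mul_of_tendsto ht limit).congr fun k ↦ ?_
    rw [← Nat.cast_succ, zpow_natCast, zpow_natCast]
    exact congrArg norm (div_eq_mul_inv _ _).symm
  · have limit := (pow_tendsto.mul_const t).mul
      ((((pow_tendsto.const_mul t).sub_const 1).pow 2).inv₀ (by simp))
    refine (summable_norm_pow_mul_of_tendsto (norm_div_lt_one hpt) limit).congr fun k ↦ ?_
    have hpk := pow_ne_zero k hp0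
    rw [show -((k : ℤ) + 1) + 1 = -k by ring, show -((k : ℤ) + 1) = -((k + 1 : ℕ) : ℤ) by simp,
      zpow_neg, zpow_neg, zpow_natCast, zpow_natCast, div_pow,
      show 1 - (p ^ k)⁻¹ / t = (t * p ^ k - 1) / (p ^ k * t) by field_simp]
    congr 1
    field_simp
    ring

theorem summable_norm_neg_mul_pow (a : 𝕜) (hp : ‖p‖ < 1) :
    Summable fun i : ℕ ↦ ‖-(a * p ^ i)‖ := by
  simpa only [norm_neg, mul_comm a] using
    summable_norm_pow_mul_of_tendsto hp (tendsto_const_nhds (x := a))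

variable [CompleteSpace 𝕜]

theorem multipliable_one_sub_mul_pow (a : 𝕜) (hp : ‖p‖ < 1) :
    Multipliable fun i : ℕ ↦ 1 - a * p ^ i := by
  simpa only [sub_eq_add_neg] using
    multipliable_one_add_of_summable (summable_norm_neg_mul_pow a hp)

theorem tendsto_qPochhammer (a : 𝕜) (hp : ‖p‖ < 1) :
    Tendsto (qPochhammer a p) atTop (𝓝 (qPochhammerInf a p)) :=
  (multipliable_one_sub_mul_pow a hp).tendsto_prod_tprod_nat

theorem qPochhammerInf_ne_zero {a : 𝕜} (hp : ‖p‖ < 1) (ha : ∀ i : ℕ, a * p ^ i ≠ 1) :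
    qPochhammerInf a p ≠ 0 := by
  simpa only [qPochhammerInf, sub_eq_add_neg] using
    tprod_one_add_ne_zero_of_summable (fun i ↦ by
      rw [← sub_eq_add_neg]
      exact sub_ne_zero.mpr (ha i).symm) (summable_norm_neg_mul_pow a hp)

theorem qPochhammerInf_ne_zero_of_norm_lt_one {a : 𝕜} (ha : ‖a‖ < 1) (hp : ‖p‖ < 1) :
    qPochhammerInf a p ≠ 0 :=
  qPochhammerInf_ne_zero hp fun i h ↦ by
    have : ‖a * p ^ i‖ < 1 := by
      rw [norm_mul, norm_pow]
      exact mul_lt_one_of_nonneg_of_lt_one_left (norm_nonneg _) ha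
        (pow_le_one₀ (norm_nonneg _) hp.le)
    simp [h] at this

theorem qPochhammerInf_eq_one_sub_mul (a : 𝕜) (hp : ‖p‖ < 1) :
    qPochhammerInf a p = (1 - a) * qPochhammerInf (a * p) p := by
  have shift (i : ℕ) : 1 - a * p ^ (i + 1) = 1 - a * p * p ^ i := by ring
  have tail := multipliable_one_sub_mul_pow (a * p) hp
  simp_rw [← shift] at tail
  rw [qPochhammerInf, tprod_eq_zero_mul' (f := fun i ↦ 1 - a * p ^ i) tail, pow_zero, mul_one]
  simp_rw [shift, qPochhammerInf]

theorem qPochhammerInf_sq_mul (a : 𝕜) (hp : ‖p‖ < 1) :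
    qPochhammerInf a (p ^ 2) * qPochhammerInf (a * p) (p ^ 2) = qPochhammerInf a p := by
  have hp2 : ‖p ^ 2‖ < 1 := by simpa using pow_lt_one₀ (norm_nonneg p) hp two_ne_zero
  have even := multipliable_one_sub_mul_pow a hp2
  have odd := multipliable_one_sub_mul_pow (a * p) hp2
  simp_rw [mul_assoc a p, ← pow_mul, ← pow_succ'] at even odd
  simp_rw [qPochhammerInf, mul_assoc a p, ← pow_mul, ← pow_succ']
  exact tprod_even_mul_odd (f := fun i ↦ 1 - a * p ^ i) even odd

theorem qPochhammerInf_mul_neg (a : 𝕜) (hp : ‖p‖ < 1) :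
    qPochhammerInf a p * qPochhammerInf (-a) p = qPochhammerInf (a ^ 2) (p ^ 2) := by
  rw [qPochhammerInf, qPochhammerInf, ← Multipliable.tprod_mul
    (multipliable_one_sub_mul_pow a hp) (multipliable_one_sub_mul_pow (-a) hp), qPochhammerInf]
  exact tprod_congr fun i ↦ by ring

theorem tendsto_qBinomialCoeff (a : 𝕜) (hp : ‖p‖ < 1) :
    Tendsto (qBinomialCoeff a p) atTop (𝓝 (qPochhammerInf a p / qPochhammerInf p p)) :=
  (tendsto_qPochhammer a hp).div (tendsto_qPochhammer p hp)
    (qPochhammerInf_ne_zero_of_norm_lt_one hp hp)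

theorem tsum_zpow_div_one_sub_mul_zpow {t a : 𝕜} (hp0 : p ≠ 0) (hpt : ‖p‖ < ‖t‖) (ht : ‖t‖ < 1)
    (ha : a ≠ 0) (hap : ∀ n : ℤ, a * p ^ n ≠ 1) :
    ∑' n : ℤ, t ^ n / (1 - a * p ^ n) =
      qPochhammerInf p p ^ 2 * qPochhammerInf (a * t) p * qPochhammerInf (p / (a * t)) p /
        (qPochhammerInf t p * qPochhammerInf (p / t) p *
          (qPochhammerInf a p * qPochhammerInf (p / a) p)) := by
  have hp := hpt.trans ht
  have ht0 := norm_pos_iff.mp ((norm_nonneg p).trans_lt hpt)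
  have hp' := qPochhammerInf_ne_zero_of_norm_lt_one hp hp
  have ht' := qPochhammerInf_ne_zero_of_norm_lt_one ht hp
  have hpt' := qPochhammerInf_ne_zero_of_norm_lt_one (norm_div_lt_one hpt) hp
  have ha' : qPochhammerInf a p ≠ 0 := qPochhammerInf_ne_zero hp fun i ↦ mod_cast hap i
  have hpa' : qPochhammerInf (p / a) p ≠ 0 := qPochhammerInf_ne_zero hp fun i h ↦ by
    rw [div_mul_eq_mul_div, div_eq_one_iff_eq ha, ← pow_succ'] at h
    refine hap (-(i + 1 : ℕ)) ?_
    rw [zpow_neg, zpow_natCast, h, mul_inv_cancel₀ ha]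
  have bilateral := tendsto_sum_antidiagonal_add (g := fun n ↦ t ^ n / (1 - a * p ^ n))
    (summable_norm_zpow_div_one_sub_mul_zpow hp0 hpt ht ha)
    (tendsto_qBinomialCoeff (p / t) hp) (tendsto_qBinomialCoeff t hp) tendsto_id tendsto_id
  have product := ((tendsto_qPochhammer (p / (a * t)) hp).mul (tendsto_qPochhammer (a * t) hp)).div
    ((tendsto_qPochhammer (p / a) hp).mul
      ((tendsto_qPochhammer a hp).comp (tendsto_add_atTop_nat 1))) (mul_ne_zero hpa' ha')
  have limits := tendsto_nhds_unique bilateral <| product.congr fun n ↦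
    (sum_div_one_sub_mul_zpow (pow_injective_of_norm_lt_one hp0 hp) ht0 ha hap n n).symm
  field_simp at limits ⊢
  linear_combination limits

theorem tsum_zpow_div_one_sub_zpow_div_sq {t : 𝕜} (hp0 : p ≠ 0) (hpt : ‖p‖ < ‖t‖) (ht : ‖t‖ < 1) :
    ∑' n : ℤ, t ^ n / (1 - p ^ (n + 1) / t) ^ 2 =
      qPochhammerInf p p ^ 4 / (qPochhammerInf t p ^ 2 * qPochhammerInf (p / t) p ^ 2) := by
  have hp := hpt.trans ht
  have ht0 := norm_pos_iff.mp ((norm_nonneg p).trans_lt hpt)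
  have hp' := qPochhammerInf_ne_zero_of_norm_lt_one hp hp
  have ht' := qPochhammerInf_ne_zero_of_norm_lt_one ht hp
  have hpt' := qPochhammerInf_ne_zero_of_norm_lt_one (norm_div_lt_one hpt) hp
  have bilateral := tendsto_sum_antidiagonal_add (g := fun n ↦ t ^ n / (1 - p ^ (n + 1) / t) ^ 2)
    (summable_norm_zpow_div_one_sub_zpow_div_sq hp0 hpt ht) (tendsto_qBinomialCoeff (p / t) hp)
    (tendsto_qBinomialCoeff t hp) (tendsto_add_atTop_nat 1) tendsto_id
  have product := ((tendsto_qPochhammer p hp).mul (tendsto_qPochhammer p hp)).div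
    (((tendsto_qPochhammer t hp).mul (tendsto_qPochhammer (p / t) hp)).comp
      (tendsto_add_atTop_nat 1)) (mul_ne_zero ht' hpt')
  have limits := tendsto_nhds_unique bilateral <| product.congr fun n ↦
    (sum_div_one_sub_zpow_div_sq (pow_injective_of_norm_lt_one hp0 hp) ht0
      (ne_zpow_of_norm_lt hp0 hpt ht) n n).symm
  generalize ∑' n : ℤ, t ^ n / (1 - p ^ (n + 1) / t) ^ 2 = S at limits ⊢
  field_simp at limits ⊢
  linear_combination limits

end

/-! ### The theta functions `φ` and `ψ` -/

theorem eulerF_eq_qPochhammerInf (q : ℂ) : eulerF q = qPochhammerInf q q :=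
  tprod_congr fun n ↦ by rw [pow_succ']

theorem eulerF_ne_zero {q : ℂ} (hq : ‖q‖ < 1) : eulerF q ≠ 0 := by
  rw [eulerF_eq_qPochhammerInf]
  exact qPochhammerInf_ne_zero_of_norm_lt_one hq hq

theorem norm_pow_lt_one {q : ℂ} (hq : ‖q‖ < 1) {n : ℕ} (hn : n ≠ 0) : ‖q ^ n‖ < 1 := by
  simpa using pow_lt_one₀ (norm_nonneg q) hq hn

theorem qPochhammerInf_self_sq {q : ℂ} (hq : ‖q‖ < 1) :
    qPochhammerInf q (q ^ 2) = eulerF q / eulerF (q ^ 2) := by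
  rw [eq_div_iff (eulerF_ne_zero (norm_pow_lt_one hq two_ne_zero)), eulerF_eq_qPochhammerInf,
    eulerF_eq_qPochhammerInf, ← qPochhammerInf_sq_mul q hq, sq q]

theorem qPochhammerInf_neg_self {q : ℂ} (hq : ‖q‖ < 1) :
    qPochhammerInf (-q) q = eulerF (q ^ 2) / eulerF q := by
  rw [eq_div_iff (eulerF_ne_zero hq), eulerF_eq_qPochhammerInf, eulerF_eq_qPochhammerInf,
    ← qPochhammerInf_mul_neg q hq, mul_comm]

theorem qPochhammerInf_neg_self_sq {q : ℂ} (hq : ‖q‖ < 1) :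
    qPochhammerInf (-q) (q ^ 2) = eulerF (q ^ 2) ^ 2 / (eulerF q * eulerF (q ^ 4)) := by
  have hq2 := norm_pow_lt_one hq two_ne_zero
  have product := qPochhammerInf_mul_neg q hq2
  rw [qPochhammerInf_self_sq hq, qPochhammerInf_self_sq hq2, ← pow_mul] at product
  have h1 := eulerF_ne_zero hq
  have h2 := eulerF_ne_zero hq2
  field_simp at product ⊢
  rw [← product]

/-- Ramanujan's theta function `φ(q) = ∑_{n ∈ ℤ} q^{n²}`, encoded by its eta quotient. -/
noncomputable def thetaPhi (q : ℂ) : ℂ :=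
  eulerF (q ^ 2) ^ 5 / (eulerF q ^ 2 * eulerF (q ^ 4) ^ 2)

/-- Ramanujan's theta function `ψ(q) = ∑_{n ≥ 0} q^{n(n+1)/2}`, encoded by its eta quotient. -/
noncomputable def thetaPsi (q : ℂ) : ℂ := eulerF (q ^ 2) ^ 2 / eulerF q

theorem thetaPsi_sq {q : ℂ} (hq : ‖q‖ < 1) : thetaPsi q ^ 2 = thetaPhi q * thetaPsi (q ^ 2) := by
  have h4 := eulerF_ne_zero (norm_pow_lt_one hq four_ne_zero)
  rw [thetaPsi, thetaPhi, thetaPsi, ← pow_mul]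
  field_simp

theorem norm_sq_lt_norm {q : ℂ} (hq0 : q ≠ 0) (hq : ‖q‖ < 1) : ‖q ^ 2‖ < ‖q‖ := by
  rw [norm_pow]
  exact pow_lt_self_of_lt_one₀ (norm_pos_iff.mpr hq0) hq one_lt_two

theorem neg_one_mul_zpow_ne_one {q : ℂ} (hq : ‖q‖ < 1) (n : ℤ) : -1 * q ^ n ≠ 1 := by
  intro h
  have norm_eq : ‖q‖ ^ n = 1 := by simpa using congrArg norm h
  obtain rfl : n = 0 := (zpow_eq_one_iff_right₀ (norm_nonneg q) hq.ne).mp norm_eq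
  norm_num at h

theorem two_mul_tsum_zpow_div_one_add_zpow {q : ℂ} (hq0 : q ≠ 0) (hq : ‖q‖ < 1) :
    2 * ∑' n : ℤ, q ^ n / (1 + q ^ (2 * n)) = thetaPhi q ^ 2 := by
  have hq2 := norm_pow_lt_one hq two_ne_zero
  have kronecker := tsum_zpow_div_one_sub_mul_zpow (pow_ne_zero 2 hq0) (norm_sq_lt_norm hq0 hq) hq
    (neg_ne_zero.mpr one_ne_zero) (neg_one_mul_zpow_ne_one hq2)
  have two_mul_neg : qPochhammerInf (-1) (q ^ 2) = 2 * qPochhammerInf (-q ^ 2) (q ^ 2) := by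
    rw [qPochhammerInf_eq_one_sub_mul _ hq2, neg_one_mul]
    norm_num
  rw [neg_one_mul, two_mul_neg, div_neg, div_neg, div_one, sq q, mul_self_div_self, ← sq q,
    ← eulerF_eq_qPochhammerInf, qPochhammerInf_self_sq hq, qPochhammerInf_neg_self hq2,
    qPochhammerInf_neg_self_sq hq, ← pow_mul] at kronecker
  have denominator (n : ℤ) : 1 + q ^ (2 * n) = 1 - -1 * (q ^ 2) ^ n := by
    rw [zpow_mul, zpow_ofNat, neg_one_mul, sub_neg_eq_add]
  simp_rw [denominator]
  rw [kronecker, thetaPhi]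
  field_simp

theorem zpow_two_mul_add_one {K : Type*} [Field K] {q : K} (hq0 : q ≠ 0) (n : ℤ) :
    q ^ (2 * n + 1) = (q ^ 2) ^ (n + 1) / q := by
  rw [← zpow_ofNat q 2, ← zpow_mul, div_eq_mul_inv, ← zpow_sub_one₀ hq0]
  congr 1
  ring

theorem tsum_zpow_div_one_sub_zpow_sq {q : ℂ} (hq0 : q ≠ 0) (hq : ‖q‖ < 1) :
    ∑' n : ℤ, q ^ n / (1 - q ^ (2 * n + 1)) ^ 2 = thetaPsi q ^ 4 := by
  simp_rw [zpow_two_mul_add_one hq0]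
  rw [tsum_zpow_div_one_sub_zpow_div_sq (pow_ne_zero 2 hq0) (norm_sq_lt_norm hq0 hq) hq, sq q,
    mul_self_div_self, ← sq q, ← eulerF_eq_qPochhammerInf, qPochhammerInf_self_sq hq, thetaPsi]
  field_simp

theorem thetaPhi_sq_add_thetaPhi_neg_sq {q : ℂ} (hq0 : q ≠ 0) (hq : ‖q‖ < 1) :
    thetaPhi q ^ 2 + thetaPhi (-q) ^ 2 = 2 * thetaPhi (q ^ 2) ^ 2 := by
  have summable {z : ℂ} (hz0 : z ≠ 0) (hz : ‖z‖ < 1) :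
      Summable fun n : ℤ ↦ z ^ n / (1 + z ^ (2 * n)) := by
    refine (summable_norm_zpow_div_one_sub_mul_zpow (pow_ne_zero 2 hz0) (norm_sq_lt_norm hz0 hz) hz
      (neg_ne_zero.mpr one_ne_zero)).of_norm.congr fun n ↦ ?_
    rw [zpow_mul, zpow_ofNat, neg_one_mul, sub_neg_eq_add]
  have even (n : ℤ) : q ^ (2 * n) / (1 + q ^ (2 * (2 * n))) +
      (-q) ^ (2 * n) / (1 + (-q) ^ (2 * (2 * n))) =
        2 * ((q ^ 2) ^ n / (1 + (q ^ 2) ^ (2 * n))) := by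
    rw [(even_two_mul n).neg_zpow, (even_two_mul (2 * n)).neg_zpow, ← two_mul, zpow_mul q 2 n,
      zpow_mul q 2 (2 * n), zpow_ofNat]
  have odd {n : ℤ} (hn : Odd n) :
      q ^ n / (1 + q ^ (2 * n)) + (-q) ^ n / (1 + (-q) ^ (2 * n)) = 0 := by
    rw [hn.neg_zpow, (even_two_mul n).neg_zpow, neg_div, add_neg_cancel]
  have support : (Function.support fun n : ℤ ↦
      q ^ n / (1 + q ^ (2 * n)) + (-q) ^ n / (1 + (-q) ^ (2 * n))) ⊆
        Set.range fun n : ℤ ↦ 2 * n := fun n hn ↦ by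
    obtain ⟨m, rfl⟩ := (Int.even_or_odd n).resolve_right fun h ↦ hn (odd h)
    exact ⟨m, two_mul m⟩
  have hnq : ‖-q‖ < 1 := by rwa [norm_neg]
  rw [← two_mul_tsum_zpow_div_one_add_zpow hq0 hq,
    ← two_mul_tsum_zpow_div_one_add_zpow (neg_ne_zero.mpr hq0) hnq,
    ← two_mul_tsum_zpow_div_one_add_zpow (pow_ne_zero 2 hq0) (norm_pow_lt_one hq two_ne_zero),
    ← mul_add, ← (summable hq0 hq).tsum_add (summable (neg_ne_zero.mpr hq0) hnq),
    ← Function.Injective.tsum_eq (mul_right_injective₀ two_ne_zero) support]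
  simp_rw [even, tsum_mul_left]

theorem thetaPsi_pow_four_add_thetaPsi_neg_pow_four {q : ℂ} (hq0 : q ≠ 0) (hq : ‖q‖ < 1) :
    thetaPsi q ^ 4 + thetaPsi (-q) ^ 4 = 2 * (thetaPhi (q ^ 2) * thetaPsi (q ^ 2)) ^ 2 := by
  have square := thetaPsi_sq hq
  have neg_square := thetaPsi_sq (q := -q) (by rwa [norm_neg])
  rw [neg_sq] at neg_square
  calc
    thetaPsi q ^ 4 + thetaPsi (-q) ^ 4 = (thetaPsi q ^ 2) ^ 2 + (thetaPsi (-q) ^ 2) ^ 2 := by ring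
    _ = (thetaPhi q ^ 2 + thetaPhi (-q) ^ 2) * thetaPsi (q ^ 2) ^ 2 := by
      rw [square, neg_square]
      ring
    _ = 2 * (thetaPhi (q ^ 2) * thetaPsi (q ^ 2)) ^ 2 := by
      rw [thetaPhi_sq_add_thetaPhi_neg_sq hq0 hq]
      ring

/-! ### The double series -/

theorem hasSum_two_mul_add_one_mul_geometric {𝕜 : Type*} [NormedField 𝕜] {y : 𝕜} (hy : ‖y‖ < 1) :
    HasSum (fun k : ℕ ↦ (2 * k + 1) * y ^ k) ((1 + y) / (1 - y) ^ 2) := by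
  have value : 2 * (y / (1 - y) ^ 2) + (1 - y)⁻¹ = (1 + y) / (1 - y) ^ 2 := by
    field_simp
    ring
  simpa only [value, add_mul, one_mul, mul_assoc] using
    ((hasSum_coe_mul_geometric_of_norm_lt_one hy).mul_left 2).add
      (hasSum_geometric_of_norm_lt_one hy)

theorem summable_two_mul_add_one_mul_pow {𝕜 : Type*} [NormedField 𝕜] [CompleteSpace 𝕜] {q : 𝕜}
    (hq : ‖q‖ < 1) :
    Summable fun p : ℕ × ℕ ↦ (2 * (p.1 : 𝕜) + 1) * q ^ (2 * p.1 * p.2 + p.1 + p.2) := by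
  have weighted := (hasSum_two_mul_add_one_mul_geometric (y := ‖q‖) (by simpa using hq)).summable
  refine .of_norm_bounded (weighted.mul_of_nonneg (summable_geometric_of_lt_one (norm_nonneg q) hq)
    (fun _ ↦ by positivity) fun _ ↦ by positivity) fun ⟨k, l⟩ ↦ ?_
  have coefficient : ‖2 * (k : 𝕜) + 1‖ ≤ 2 * k + 1 := by
    simpa using Nat.norm_cast_le (α := 𝕜) (2 * k + 1)
  have exponent : k + l ≤ 2 * k * l + k + l := by
    rw [add_assoc]
    exact Nat.le_add_left _ _
  simp only
  rw [norm_mul, norm_pow, mul_assoc _ (‖q‖ ^ k), ← pow_add]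
  exact mul_le_mul coefficient (pow_le_pow_of_le_one (norm_nonneg q) hq.le exponent)
    (by positivity) (by positivity)

theorem zpow_div_one_sub_zpow_sq_neg {K : Type*} [Field K] {q : K} (hq0 : q ≠ 0) (n : ℤ) :
    q ^ (-(n + 1)) / (1 - q ^ (2 * -(n + 1) + 1)) ^ 2 =
      q ^ n * q ^ (2 * n + 1) / (1 - q ^ (2 * n + 1)) ^ 2 := by
  have split : q ^ (-(n + 1)) = q ^ n / q ^ (2 * n + 1) := by
    rw [← zpow_sub₀ hq0]
    congr 1
    ring
  rw [split, show 2 * -(n + 1) + 1 = -(2 * n + 1) by ring, zpow_neg]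
  field_simp
  ring

theorem thetaPsi_pow_four {q : ℂ} (hq0 : q ≠ 0) (hq : ‖q‖ < 1) :
    thetaPsi q ^ 4 =
      ∑' p : ℕ × ℕ, (2 * (p.1 : ℂ) + 1) * q ^ (2 * p.1 * p.2 + p.1 + p.2) := by
  have bilateral : Summable fun n : ℤ ↦ q ^ n / (1 - q ^ (2 * n + 1)) ^ 2 := by
    simp_rw [zpow_two_mul_add_one hq0]
    exact (summable_norm_zpow_div_one_sub_zpow_div_sq (pow_ne_zero 2 hq0)
      (norm_sq_lt_norm hq0 hq) hq).of_norm
  have row (l : ℕ) : ∑' k : ℕ, (2 * (k : ℂ) + 1) * q ^ (2 * k * l + k + l) =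
      q ^ l * ((1 + q ^ (2 * l + 1)) / (1 - q ^ (2 * l + 1)) ^ 2) := by
    rw [← ((hasSum_two_mul_add_one_mul_geometric
      (norm_pow_lt_one hq (2 * l).succ_ne_zero)).mul_left (q ^ l)).tsum_eq]
    refine tsum_congr fun k ↦ ?_
    rw [← pow_mul, Nat.succ_eq_add_one]
    ring
  have fold (l : ℕ) : q ^ (l : ℤ) / (1 - q ^ (2 * (l : ℤ) + 1)) ^ 2 +
      q ^ (-((l : ℤ) + 1)) / (1 - q ^ (2 * -((l : ℤ) + 1) + 1)) ^ 2 =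
        q ^ l * ((1 + q ^ (2 * l + 1)) / (1 - q ^ (2 * l + 1)) ^ 2) := by
    rw [zpow_div_one_sub_zpow_sq_neg hq0, ← add_div, ← mul_one_add, mul_div_assoc]
    norm_cast
  calc
    thetaPsi q ^ 4 = ∑' n : ℤ, q ^ n / (1 - q ^ (2 * n + 1)) ^ 2 :=
      (tsum_zpow_div_one_sub_zpow_sq hq0 hq).symm
    _ = ∑' l : ℕ, q ^ l * ((1 + q ^ (2 * l + 1)) / (1 - q ^ (2 * l + 1)) ^ 2) :=
      (tsum_nat_add_neg_add_one bilateral).symm.trans (tsum_congr fold)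
    _ = ∑' (l : ℕ) (k : ℕ), (2 * (k : ℂ) + 1) * q ^ (2 * k * l + k + l) :=
      tsum_congr fun l ↦ (row l).symm
    _ = ∑' p : ℕ × ℕ, (2 * (p.2 : ℂ) + 1) * q ^ (2 * p.2 * p.1 + p.2 + p.1) :=
      (summable_two_mul_add_one_mul_pow hq).prod_symm.tsum_prod.symm
    _ = ∑' p : ℕ × ℕ, (2 * (p.1 : ℂ) + 1) * q ^ (2 * p.1 * p.2 + p.1 + p.2) :=
      (Equiv.prodComm ℕ ℕ).tsum_eq
        fun p : ℕ × ℕ ↦ (2 * (p.1 : ℂ) + 1) * q ^ (2 * p.1 * p.2 + p.1 + p.2)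

theorem tsum_prod_eq_tsum_even_add_tsum_odd {E : Type*} [AddCommGroup E] [UniformSpace E]
    [IsUniformAddGroup E] [CompleteSpace E] [T2Space E] {f : ℕ × ℕ → E} (hf : Summable f)
    (hodd : ∀ p, Odd (p.1 + p.2) → f p = 0) :
    ∑' p, f p = ∑' p : ℕ × ℕ, f (2 * p.1, 2 * p.2) +
      ∑' p : ℕ × ℕ, f (2 * p.1 + 1, 2 * p.2 + 1) := by
  have even_injective : Function.Injective fun p : ℕ × ℕ ↦ (2 * p.1, 2 * p.2) := by
    rintro ⟨_, _⟩ ⟨_, _⟩ h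
    simpa using h
  have odd_injective : Function.Injective fun p : ℕ × ℕ ↦ (2 * p.1 + 1, 2 * p.2 + 1) := by
    rintro ⟨_, _⟩ ⟨_, _⟩ h
    simpa using h
  have disjoint : Disjoint (Set.range fun p : ℕ × ℕ ↦ (2 * p.1, 2 * p.2))
      (Set.range fun p : ℕ × ℕ ↦ (2 * p.1 + 1, 2 * p.2 + 1)) := by
    rw [Set.disjoint_left]
    rintro _ ⟨p, rfl⟩ ⟨r, h⟩
    simp only [Prod.mk.injEq] at h
    omega
  have support : Function.support f ⊆ (Set.range fun p : ℕ × ℕ ↦ (2 * p.1, 2 * p.2)) ∪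
      Set.range fun p : ℕ × ℕ ↦ (2 * p.1 + 1, 2 * p.2 + 1) := by
    rintro ⟨k, l⟩ h
    have parity : Even (k + l) := Nat.not_odd_iff_even.mp fun hkl ↦ h (hodd _ hkl)
    obtain ⟨i, rfl | rfl⟩ := Nat.even_or_odd' k
    · exact .inl ⟨(i, l / 2), Prod.ext rfl (by grind)⟩
    · exact .inr ⟨(i, l / 2), Prod.ext rfl (by grind)⟩
  have even_sum := even_injective.hasSum_range_iff.mpr (hf.comp_injective even_injective).hasSum
  have odd_sum := odd_injective.hasSum_range_iff.mpr (hf.comp_injective odd_injective).hasSum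
  exact ((hasSum_subtype_iff_of_support_subset support).mp
    (even_sum.add_disjoint disjoint odd_sum)).tsum_eq

theorem two_mul_Phi2222 {x : ℂ} (hx0 : x ≠ 0) (hx : ‖x‖ < 1) :
    2 * Phi2222 x = x * (thetaPsi (x ^ 2) ^ 4 + thetaPsi (-x ^ 2) ^ 4) := by
  have hx2 := norm_pow_lt_one hx two_ne_zero
  have hnx2 : ‖-x ^ 2‖ < 1 := by rwa [norm_neg]
  have sum := summable_two_mul_add_one_mul_pow hx2
  have neg_sum := summable_two_mul_add_one_mul_pow hnx2
  have even_term {k l : ℕ} (hkl : Even (k + l)) :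
      x * ((2 * (k : ℂ) + 1) * (x ^ 2) ^ (2 * k * l + k + l) +
        (2 * (k : ℂ) + 1) * (-x ^ 2) ^ (2 * k * l + k + l)) =
          2 * ((2 * k + 1) * x ^ ((2 * k + 1) * (2 * l + 1))) := by
    have even : Even (2 * k * l + k + l) := by grind
    rw [even.neg_pow, ← pow_mul]
    ring
  rw [thetaPsi_pow_four (pow_ne_zero 2 hx0) hx2,
    thetaPsi_pow_four (neg_ne_zero.mpr (pow_ne_zero 2 hx0)) hnx2, ← sum.tsum_add neg_sum,
    tsum_prod_eq_tsum_even_add_tsum_odd (sum.add neg_sum), Phi2222, mul_add, mul_add]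
  · simp_rw [← tsum_mul_left]
    congr 1 <;> refine tsum_congr fun p ↦ ?_ <;> rw [even_term (by grind)] <;> push_cast <;> ring
  · rintro ⟨k, l⟩ hkl
    have odd : Odd (2 * k * l + k + l) := by grind
    simp only [odd.neg_pow, mul_neg, add_neg_cancel]

theorem thetaPhi_mul_thetaPsi_sq (q : ℂ) :
    (thetaPhi q * thetaPsi q) ^ 2 =
      eulerF (q ^ 2) ^ 14 / (eulerF q ^ 6 * eulerF (q ^ 4) ^ 4) := by
  rw [thetaPhi, thetaPsi]
  field_simp

/-- `Φ(x) = x F(x⁸)¹⁴/(F(x⁴)⁶F(x¹⁶)⁴)`, i.e.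
`ψ = η(q_d⁸)¹⁴/(η(q_d⁴)⁶η(q_d¹⁶)⁴)`. -/
theorem phi2222_eq_eta_quotient (x : ℂ) (hx : ‖x‖ < 1) :
    Phi2222 x
      = x * eulerF (x ^ 8) ^ 14 / (eulerF (x ^ 4) ^ 6 * eulerF (x ^ 16) ^ 4) := by
  obtain rfl | hx0 := eq_or_ne x 0
  · simp [Phi2222]
  have lambert := two_mul_Phi2222 hx0 hx
  have theta := thetaPsi_pow_four_add_thetaPsi_neg_pow_four (pow_ne_zero 2 hx0)
    (norm_pow_lt_one hx two_ne_zero)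
  have eta := thetaPhi_mul_thetaPsi_sq (x ^ 4)
  rw [← pow_mul] at theta
  rw [← pow_mul, ← pow_mul] at eta
  rw [theta, eta] at lambert
  linear_combination lambert / 2
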